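/- (Theorem 2, Case 1 of the cascade Gaussian optimization.) Assume D₂·(sX + sZ) < sX·sZ (i.e. D₂ is strictly below the conditional variance σ²_{X|Y} = sX·sZ/(sX + sZ)) and r·D₂·(sX·sZ − D₂·sZ − D₂·sX) ≥ sX·sZ·(sX − D₂). Then s̄ := (1/D₂ − 1/sZ − 1/sX)⁻¹ is the greatest element of the feasible set F, i.e. IsGreatest F s̄. -/

import Mathlib

/-- The feasible set of the cascade Gaussian optimization problem. -/
def feasible (sX sZ D₂ r : ℝ) : Set ℝ :=
  {s : ℝ | 0 < s ∧ ∃ α : ℝ,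
    (r - 1) * s ≥ (1 + α) ^ 2 * sX + α ^ 2 * sZ ∧
    s * (sX - D₂) ≤ α ^ 2 * (sX * D₂ + sZ * D₂ - sX * sZ) + 2 * α * sX * D₂ + D₂ * sX}

/-- Theorem 2, Case 1 of the cascade Gaussian optimization. -/
theorem cascade_gaussian_case1 (sX sZ D₂ r : ℝ)
    (hsX : 0 < sX) (hsZ : 0 < sZ) (hD₂ : 0 < D₂) (hr : 1 < r)
    (h1 : D₂ * (sX + sZ) < sX * sZ)
    (h2 : r * D₂ * (sX * sZ - D₂ * sZ - D₂ * sX) ≥ sX * sZ * (sX - D₂)) :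
    IsGreatest (feasible sX sZ D₂ r) (1 / D₂ - 1 / sZ - 1 / sX)⁻¹ := by
  obtain ⟨K, hK⟩ : ∃ K, K = sX * sZ - D₂ * (sX + sZ) := ⟨_, rfl⟩
  have hK0 : 0 < K := by linarith
  have hXD : 0 < sX - D₂ := by
    by_contra h
    nlinarith [mul_pos hD₂ hsX, mul_nonneg hsZ.le (by linarith : 0 ≤ D₂ - sX)]
  have hs : (1 / D₂ - 1 / sZ - 1 / sX)⁻¹ = D₂ * sX * sZ / K := by
    have : 1 / D₂ - 1 / sZ - 1 / sX = K / (D₂ * sX * sZ) := by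
      rw [hK]
      field_simp
      ring
    rw [this, inv_div]
  rw [hs]
  constructor
  · refine ⟨by positivity, sX * D₂ / K, ?_, ?_⟩
    · have e : 1 + sX * D₂ / K = sZ * (sX - D₂) / K := by
        field_simp
        rw [hK]
        ring
      have e2 : (r - 1) * (D₂ * sX * sZ / K) - ((1 + sX * D₂ / K) ^ 2 * sX
          + (sX * D₂ / K) ^ 2 * sZ)
          = sX * sZ * (r * D₂ * K - sX * sZ * (sX - D₂)) / K ^ 2 := by
        rw [e]
        field_simp
        rw [hK]
        ring
      have h3 : 0 ≤ r * D₂ * K - sX * sZ * (sX - D₂) := by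
        rw [hK]
        linarith
      have : 0 ≤ sX * sZ * (r * D₂ * K - sX * sZ * (sX - D₂)) / K ^ 2 := by positivity
      linarith
    · have e : sX * D₂ + sZ * D₂ - sX * sZ = -K := by rw [hK]; ring
      rw [e]
      apply le_of_eq
      field_simp
      rw [hK]
      ring
  · rintro s ⟨_, α, _, h⟩
    rw [le_div_iff₀ hK0]
    have e : sX * D₂ + sZ * D₂ - sX * sZ = -K := by rw [hK]; ring
    rw [e] at h
    have h4 := mul_le_mul_of_nonneg_right h hK0.le
    have h5 : (α ^ 2 * -K + 2 * α * sX * D₂ + D₂ * sX) * K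
        = D₂ * sX * sZ * (sX - D₂) - (α * K - sX * D₂) ^ 2 := by
      rw [hK]
      ring
    refine le_of_mul_le_mul_right ?_ hXD
    nlinarith [sq_nonneg (α * K - sX * D₂)]
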